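/- arXiv:2108.09061 — 4 statements merged into one kernel-verified Lean document; each statement's English description precedes it below -/
import Mathlib

section
/- Let N be a positive integer and let S' ⊊ S ⊆ Fin N with S' nonempty. Set θ = arcsin √(|S'|/|S|) and r = ⌊π/(4θ)⌋, and let ψ_S be the uniform superposition over S, O_{S'} the oracle flipping the sign of basis states in S', and G = R_{ψ_S} ∘ O_{S'} the restricted Grover operator. Then: (i) r ≤ (π/4)·√(|S|/|S'|); (ii) ∑_{i ∈ S'} |⟨e i, G^r ψ_S⟩|² ≥ 1 − |S'|/|S| (a marked state is measured with high probability); and (iii) ⟨e i, G^r ψ_S⟩ = 0 for every i ∉ S (states outside the restricted search space are never measured). -/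
open scoped InnerProductSpace

/-- The uniform superposition `ψ_T = (1/√|T|) ∑_{i∈T} e i` over a finite set `T` of
basis indices. -/
noncomputable def uniformSuperposition {ι : Type*} [Fintype ι] [DecidableEq ι]
    (T : Finset ι) : EuclideanSpace ℂ ι :=
  (Real.sqrt T.card)⁻¹ • ∑ i ∈ T, EuclideanSpace.single i (1 : ℂ)

/-- The oracle `O_{S'}`, flipping the sign of the basis states indexed by `S'`. -/
noncomputable def groverOracle {ι : Type*} [Fintype ι] [DecidableEq ι] (S' : Finset ι)
    (x : EuclideanSpace ℂ ι) : EuclideanSpace ℂ ι :=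
  WithLp.toLp 2 fun i => if i ∈ S' then -x i else x i

/-- The groverReflection `R_ψ : x ↦ 2⟨ψ, x⟩ψ − x` about a vector `ψ`. -/
noncomputable def groverReflection {ι : Type*} [Fintype ι]
    (ψ : EuclideanSpace ℂ ι) (x : EuclideanSpace ℂ ι) : EuclideanSpace ℂ ι :=
  (2 : ℂ) • ⟪ψ, x⟫_ℂ • ψ - x

theorem unif_apply {N : ℕ} (T : Finset (Fin N)) (i : Fin N) :
    uniformSuperposition T i = (((if i ∈ T then (Real.sqrt T.card)⁻¹ else 0 : ℝ)) : ℂ) := by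
  unfold uniformSuperposition
  simp only [PiLp.smul_apply, WithLp.ofLp_sum, Finset.sum_apply,
    PiLp.ofLp_single, Pi.single_apply]
  by_cases h : i ∈ T <;> simp [Finset.sum_ite_eq, Complex.real_smul, h]

theorem inner_unif {N : ℕ} (T : Finset (Fin N)) (x : EuclideanSpace ℂ (Fin N)) :
    ⟪uniformSuperposition T, x⟫_ℂ = ((Real.sqrt T.card)⁻¹ : ℝ) * ∑ i ∈ T, x i := by
  rw [PiLp.inner_apply, Finset.mul_sum]
  symm
  rw [← Finset.sum_subset (Finset.subset_univ T)]
  · refine Finset.sum_congr rfl fun i hi => ?_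
    simp [unif_apply, hi, mul_comm]
  · intro i _ hi
    simp [unif_apply, hi]

theorem grover_iter {N : ℕ} (S' S : Finset (Fin N)) (hss : S' ⊂ S)
    (θ C : ℝ) (hC : C = Real.sqrt S.card) (hC0 : 0 < C)
    (hs : 0 < Real.sin θ) (hc : 0 < Real.cos θ)
    (hm : (S'.card : ℝ) = (C * Real.sin θ) ^ 2)
    (hn : ((S \ S').card : ℝ) = (C * Real.cos θ) ^ 2) (k : ℕ) (i : Fin N) :
    ((groverReflection (uniformSuperposition S) ∘ groverOracle S')^[k]
      (uniformSuperposition S)) i =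
    ((if i ∈ S' then Real.sin ((2 * k + 1) * θ) / (C * Real.sin θ) else
      if i ∈ S then Real.cos ((2 * k + 1) * θ) / (C * Real.cos θ) else 0 : ℝ) : ℂ) := by
  induction k generalizing i with
  | zero =>
    have h1 : Real.sin θ / (C * Real.sin θ) = C⁻¹ := by field_simp
    have h2 : Real.cos θ / (C * Real.cos θ) = C⁻¹ := by field_simp
    rw [Function.iterate_zero, id, unif_apply, ← hC]
    by_cases h : i ∈ S'
    · simp [h, hss.1 h, h1]
    · by_cases h' : i ∈ S <;> simp [h, h', h2]
  | succ k ih =>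
    rw [Function.iterate_succ_apply']
    set x := (groverReflection (uniformSuperposition S) ∘ groverOracle S')^[k]
      (uniformSuperposition S) with hx
    set A : ℝ := (2 * k + 1) * θ with hA
    have hA' : (2 * ((k + 1 : ℕ) : ℝ) + 1) * θ = A + 2 * θ := by rw [hA]; push_cast; ring
    have hin : ⟪uniformSuperposition S, groverOracle S' x⟫_ℂ = (Real.cos (A + θ) : ℝ) := by
      rw [inner_unif, ← Finset.sum_sdiff hss.1]
      have e1 : ∑ i ∈ S \ S', (groverOracle S' x) i
          = ∑ i ∈ S \ S', ((Real.cos A / (C * Real.cos θ) : ℝ) : ℂ) := by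
        refine Finset.sum_congr rfl fun i hi => ?_
        rw [Finset.mem_sdiff] at hi
        simp only [groverOracle, ih, hi.1, hi.2, if_true, if_false]
      have e2 : ∑ i ∈ S', (groverOracle S' x) i
          = ∑ i ∈ S', ((-(Real.sin A / (C * Real.sin θ)) : ℝ) : ℂ) := by
        refine Finset.sum_congr rfl fun i hi => ?_
        simp only [groverOracle, ih, hi, if_true, Complex.ofReal_neg]
      rw [e1, e2, ← Complex.ofReal_sum, ← Complex.ofReal_sum, ← Complex.ofReal_add,
        ← Complex.ofReal_mul, ← hC, Finset.sum_const, Finset.sum_const, nsmul_eq_mul,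
        nsmul_eq_mul, hm, hn, Real.cos_add]
      congr 1
      field_simp
      ring
    have key : (groverReflection (uniformSuperposition S) (groverOracle S' x)) i =
        2 * ((Real.cos (A + θ) : ℝ) * uniformSuperposition S i) - groverOracle S' x i := by
      rw [groverReflection, hin]; simp
    rw [Function.comp_apply, key, unif_apply, ← hC, hA']
    have h0 := Real.sin_sq_add_cos_sq θ
    by_cases h : i ∈ S'
    · simp only [groverOracle, ih, h, hss.1 h, if_true]
      rw [← Complex.ofReal_neg, ← Complex.ofReal_mul, ← Complex.ofReal_ofNat,
        ← Complex.ofReal_mul, ← Complex.ofReal_sub]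
      congr 1
      field_simp
      rw [Real.cos_add, Real.sin_add, Real.sin_two_mul, Real.cos_two_mul]
      linear_combination (-2 * Real.sin A) * h0
    · by_cases h' : i ∈ S
      · simp only [groverOracle, ih, h, h', if_true, if_false]
        rw [← Complex.ofReal_mul, ← Complex.ofReal_ofNat,
          ← Complex.ofReal_mul, ← Complex.ofReal_sub]
        congr 1
        field_simp
        rw [Real.cos_add, Real.cos_add, Real.sin_two_mul, Real.cos_two_mul]
        ring
      · simp [groverOracle, ih, h, h']

/-- **Proposition 1 (Restricted Grover search).** -/
theorem restricted_grover_search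
    (N : ℕ) (hN : 0 < N) (S' S : Finset (Fin N)) (hss : S' ⊂ S) (hne : S'.Nonempty)
    (θ : ℝ) (hθ : θ = Real.arcsin (Real.sqrt ((S'.card : ℝ) / S.card)))
    (r : ℕ) (hr : r = ⌊Real.pi / (4 * θ)⌋₊)
    (G : EuclideanSpace ℂ (Fin N) → EuclideanSpace ℂ (Fin N))
    (hG : G = groverReflection (uniformSuperposition S) ∘ groverOracle S') :
    ((r : ℝ) ≤ Real.pi / 4 * Real.sqrt ((S.card : ℝ) / S'.card)) ∧
    ((1 : ℝ) - (S'.card : ℝ) / S.card ≤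
      ∑ i ∈ S',
        ‖⟪EuclideanSpace.single i (1 : ℂ), G^[r] (uniformSuperposition S)⟫_ℂ‖ ^ 2) ∧
    (∀ i ∉ S, ⟪EuclideanSpace.single i (1 : ℂ), G^[r] (uniformSuperposition S)⟫_ℂ = 0) := by
  have hcard : (S'.card : ℝ) < S.card := by exact_mod_cast Finset.card_lt_card hss
  have hm0 : (0 : ℝ) < S'.card := by exact_mod_cast hne.card_pos
  have hn0 : (0 : ℝ) < S.card := hm0.trans hcard
  have hq0 : (0 : ℝ) < (S'.card : ℝ) / S.card := by positivity
  have hq1 : (S'.card : ℝ) / S.card < 1 := by rw [div_lt_one hn0]; exact hcard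
  have hsq0 := Real.sqrt_pos.2 hq0
  have hsq1 : Real.sqrt ((S'.card : ℝ) / S.card) < 1 := by
    rw [Real.sqrt_lt' one_pos]; simpa using hq1
  have hsin : Real.sin θ = Real.sqrt ((S'.card : ℝ) / S.card) := by
    rw [hθ, Real.sin_arcsin (by linarith) hsq1.le]
  have hθ0 : 0 < θ := by rw [hθ]; exact Real.arcsin_pos.2 hsq0
  have hθ1 : θ < Real.pi / 2 := by rw [hθ]; exact Real.arcsin_lt_pi_div_two.2 hsq1
  have hs : 0 < Real.sin θ := by rw [hsin]; exact hsq0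
  have hc : 0 < Real.cos θ := Real.cos_pos_of_mem_Ioo ⟨by linarith, hθ1⟩
  have hs2 : Real.sin θ ^ 2 = (S'.card : ℝ) / S.card := by rw [hsin, Real.sq_sqrt hq0.le]
  have hc2 : Real.cos θ ^ 2 = 1 - (S'.card : ℝ) / S.card := by
    rw [← hs2]; linarith [Real.sin_sq_add_cos_sq θ]
  have hC0 := Real.sqrt_pos.2 hn0
  have hm : (S'.card : ℝ) = (Real.sqrt S.card * Real.sin θ) ^ 2 := by
    rw [mul_pow, hs2, Real.sq_sqrt hn0.le, mul_div_cancel₀ _ hn0.ne']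
  have hn : ((S \ S').card : ℝ) = (Real.sqrt S.card * Real.cos θ) ^ 2 := by
    rw [mul_pow, hc2, Real.sq_sqrt hn0.le, Finset.card_sdiff_of_subset hss.1,
      Nat.cast_sub (Finset.card_le_card hss.1), mul_sub, mul_one,
      mul_div_cancel₀ _ hn0.ne']
  have hpi := Real.pi_pos
  have hr1 : (r : ℝ) ≤ Real.pi / (4 * θ) := by rw [hr]; exact Nat.floor_le (by positivity)
  have hr2 : Real.pi / (4 * θ) < r + 1 := by rw [hr]; exact Nat.lt_floor_add_one _
  have hin : ∀ i, ⟪EuclideanSpace.single i (1 : ℂ), G^[r] (uniformSuperposition S)⟫_ℂ =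
      (G^[r] (uniformSuperposition S)) i := by
    intro i; simp [EuclideanSpace.inner_single_left]
  have hit := grover_iter S' S hss θ _ rfl hC0 hs hc hm hn r
  rw [← hG] at hit
  refine ⟨?_, ?_, ?_⟩
  · refine hr1.trans ?_
    have : Real.sqrt ((S.card : ℝ) / S'.card) = (Real.sin θ)⁻¹ := by
      rw [hsin, ← Real.sqrt_inv, inv_div]
    rw [this, ← div_eq_mul_inv, div_div]
    have := Real.sin_le hθ0.le
    gcongr
  · have e : ∑ i ∈ S', ‖⟪EuclideanSpace.single i (1 : ℂ), G^[r] (uniformSuperposition S)⟫_ℂ‖ ^ 2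
        = Real.sin ((2 * r + 1) * θ) ^ 2 := by
      rw [Finset.sum_congr rfl (g := fun _ =>
        (Real.sin ((2 * r + 1) * θ) / (Real.sqrt S.card * Real.sin θ)) ^ 2)]
      · rw [Finset.sum_const, nsmul_eq_mul, div_pow, ← hm,
          mul_div_cancel₀ _ hm0.ne']
      · intro i hi
        rw [hin, hit, if_pos hi, Complex.norm_real, Real.norm_eq_abs, sq_abs]
    rw [e, ← hc2]
    rw [le_div_iff₀ (by positivity)] at hr1
    rw [div_lt_iff₀ (by positivity)] at hr2
    have : Real.sin ((2 * r + 1) * θ) = Real.cos |(2 * r + 1) * θ - Real.pi / 2| := by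
      rw [Real.cos_abs, Real.cos_sub_pi_div_two]
    rw [this]
    refine pow_le_pow_left₀ hc.le ?_ 2
    refine Real.cos_le_cos_of_nonneg_of_le_pi (abs_nonneg _) (by linarith) ?_
    rw [abs_le]
    constructor <;> nlinarith
  · intro i hi
    rw [hin, hit, if_neg (fun h => hi (hss.1 h)), if_neg hi, Complex.ofReal_zero]
end

section
/- Let θ be a real number with 0 < θ ≤ π/2 and set r = ⌊π/(4θ)⌋. Then sin²((2r+1)θ) ≥ cos²θ = 1 − sin²θ. Moreover, if sin θ = √(M/N) for integers 1 ≤ M ≤ N, then r ≤ (π/4)·√(N/M). -/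
/-- **Iteration-count analysis for Grover search.** After `r = ⌊π/(4θ)⌋` Grover
iterations, the success probability `sin²((2r+1)θ)` is at least `cos²θ = 1 − sin²θ`,
and if `sin θ = √(M/N)` then `r ≤ (π/4)·√(N/M)`. -/
theorem grover_iteration_count (θ : ℝ) (hθ₁ : 0 < θ) (hθ₂ : θ ≤ Real.pi / 2)
    (r : ℕ) (hr : r = ⌊Real.pi / (4 * θ)⌋₊) :
    (Real.cos θ ^ 2 ≤ Real.sin ((2 * r + 1) * θ) ^ 2) ∧
    (Real.cos θ ^ 2 = 1 - Real.sin θ ^ 2) ∧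
    (∀ M N : ℕ, 1 ≤ M → M ≤ N → Real.sin θ = Real.sqrt ((M : ℝ) / N) →
      (r : ℝ) ≤ Real.pi / 4 * Real.sqrt ((N : ℝ) / M)) := by
  have h4 : (0 : ℝ) < 4 * θ := by linarith
  have hle : (r : ℝ) ≤ Real.pi / (4 * θ) := by
    rw [hr]; exact Nat.floor_le (by positivity)
  have hlt : Real.pi / (4 * θ) < r + 1 := by
    rw [hr]; exact Nat.lt_floor_add_one _
  have hle' := (le_div_iff₀ h4).1 hle
  have hlt' := (div_lt_iff₀ h4).1 hlt
  refine ⟨?_, ?_, ?_⟩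
  · have hc : 0 ≤ Real.cos θ := Real.cos_nonneg_of_mem_Icc ⟨by linarith, hθ₂⟩
    have e : Real.sin ((2 * r + 1) * θ) = Real.cos |(2 * r + 1) * θ - Real.pi / 2| := by
      rw [Real.cos_abs, Real.cos_sub_pi_div_two]
    rw [e]
    refine pow_le_pow_left₀ hc ?_ 2
    apply Real.cos_le_cos_of_nonneg_of_le_pi (abs_nonneg _) (by linarith [Real.pi_pos])
    rw [abs_le]
    constructor <;> nlinarith
  · linarith [Real.sin_sq_add_cos_sq θ]
  · intro M N hM hN hs
    have hsp : 0 < Real.sin θ := Real.sin_pos_of_pos_of_lt_pi hθ₁ (by linarith [Real.pi_pos])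
    have e : Real.sqrt ((N : ℝ) / M) = (Real.sin θ)⁻¹ := by
      rw [hs, ← Real.sqrt_inv, inv_div]
    rw [e]
    have hsl : Real.sin θ ≤ θ := Real.sin_le hθ₁.le
    calc (r : ℝ) ≤ Real.pi / (4 * θ) := hle
      _ = Real.pi / 4 * θ⁻¹ := by field_simp
      _ ≤ Real.pi / 4 * (Real.sin θ)⁻¹ := by
        have := Real.pi_pos
        gcongr
end

section
/- Let N be a positive integer, S' ⊆ S ⊆ Fin N with S nonempty, ψ_S the uniform superposition over S, O_{S'} the oracle flipping the sign of basis states in S', and G = R_{ψ_S} ∘ O_{S'}. Then for every natural number r, the vector G^r ψ_S lies in the span of {e i : i ∈ S}; equivalently, ⟨e i, G^r ψ_S⟩ = 0 for every i ∉ S. Hence the evolution of the restricted Grover algorithm never leaves the subspace spanned by the restricted search space, and states outside S have zero probability of being measured. -/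
open scoped InnerProductSpace

/-- The evolution of the restricted Grover algorithm never leaves the subspace spanned
by the restricted search space `S`. -/
theorem restricted_grover_stays_in_span
    (N : ℕ) (hN : 0 < N) (S' S : Finset (Fin N)) (hss : S' ⊆ S) (hSne : S.Nonempty)
    (G : EuclideanSpace ℂ (Fin N) → EuclideanSpace ℂ (Fin N))
    (hG : G = groverReflection (uniformSuperposition S) ∘ groverOracle S') :
    ∀ r : ℕ,
      G^[r] (uniformSuperposition S) ∈
        Submodule.span ℂ ((fun i => EuclideanSpace.single i (1 : ℂ)) '' (S : Set (Fin N))) ∧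
      ∀ i ∉ S, ⟪EuclideanSpace.single i (1 : ℂ), G^[r] (uniformSuperposition S)⟫_ℂ = 0 := by
  have hψ : ∀ i ∉ S, (uniformSuperposition S) i = 0 := by
    intro i hi
    unfold uniformSuperposition
    rw [PiLp.smul_apply, WithLp.ofLp_sum, Finset.sum_apply, Finset.sum_eq_zero, smul_zero]
    intro j hj
    have hij : i ≠ j := fun h => hi (h ▸ hj)
    simp [hij]
  have key : ∀ r : ℕ, ∀ i ∉ S, (G^[r] (uniformSuperposition S)) i = 0 := by
    intro r
    induction r with
    | zero => simpa using hψ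
    | succ r ih =>
      intro i hi
      have hi' : i ∉ S' := fun h => hi (hss h)
      rw [Function.iterate_succ_apply']
      generalize G^[r] (uniformSuperposition S) = x at ih
      subst hG
      simp [groverReflection, groverOracle, hψ i hi, ih i hi]
  intro r
  refine ⟨?_, fun i hi => ?_⟩
  · have hk := key r
    generalize G^[r] (uniformSuperposition S) = x at hk
    have hx : x = ∑ i ∈ S, x i • EuclideanSpace.single i (1 : ℂ) := by
      ext j
      rw [WithLp.ofLp_sum, Finset.sum_apply]
      by_cases hj : j ∈ S
      · rw [Finset.sum_eq_single_of_mem j hj]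
        · simp
        · intro k _ hk
          simp [hk.symm]
      · rw [hk j hj, Finset.sum_eq_zero]
        intro k hkS
        have : j ≠ k := fun h => hj (h ▸ hkS)
        simp [this]
    rw [hx]
    exact Submodule.sum_mem _ fun i hi =>
      Submodule.smul_mem _ _ (Submodule.subset_span ⟨i, hi, rfl⟩)
  · rw [EuclideanSpace.inner_single_left, key r i hi, mul_zero]
end

section
/- Let N be a positive integer and S' ⊆ S ⊆ Fin N with |S| = 256 and |S'| = 24 (as arises from 4-coloring the complete graph K₄, where S consists of the 256 assignments of 4 colors to the four vertices and S' of the 4! = 24 proper colorings). Let ψ_S be the uniform superposition over S, O_{S'} the oracle flipping the sign of basis states in S', and G = R_{ψ_S} ∘ O_{S'}. Then after two Grover iterations, for every i ∈ S', |⟨e i, G² ψ_S⟩|² = 43681/1048576 (≈ 0.041657), and for every i ∈ S ∖ S', |⟨e i, G² ψ_S⟩|² = 29/30408704 (≈ 10⁻⁶). -/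
open scoped InnerProductSpace

/-- Vector with amplitude `a` on `S'`, `b` on the rest of `S`, zero elsewhere. -/
noncomputable def gvec {N : ℕ} (S' S : Finset (Fin N)) (a b : ℂ) : EuclideanSpace ℂ (Fin N) :=
  WithLp.toLp 2 fun i => if i ∈ S' then a else if i ∈ S then b else 0

theorem unif_eq {N : ℕ} (S' S : Finset (Fin N)) (hss : S' ⊆ S) (hS : S.card = 256) :
    uniformSuperposition S = gvec S' S (1/16) (1/16) := by
  have h16 : Real.sqrt (256 : ℝ) = 16 := by
    rw [show (256 : ℝ) = 16 ^ 2 by norm_num]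
    exact Real.sqrt_sq (by norm_num)
  ext i
  have hi := @hss i
  by_cases h1 : i ∈ S' <;> by_cases h2 : i ∈ S <;>
    simp_all [uniformSuperposition, gvec, Pi.single_apply]

theorem gvec_inner {N : ℕ} (S' S : Finset (Fin N)) (hss : S' ⊆ S)
    (hS : S.card = 256) (hS' : S'.card = 24) (a b : ℂ) :
    ⟪gvec S' S (1/16) (1/16), gvec S' S a b⟫_ℂ = (24 * a + 232 * b) / 16 := by
  have h16 : (starRingEnd ℂ) 16 = 16 := Complex.conj_ofNat 16
  have h : ∀ i, inner ℂ (gvec S' S (1/16) (1/16) i) (gvec S' S a b i) =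
      (if i ∈ S' then a / 16 else 0) + (if i ∈ S \ S' then b / 16 else 0) := by
    intro i
    by_cases h1 : i ∈ S' <;> by_cases h2 : i ∈ S <;>
      simp [gvec, h1, h2, div_eq_mul_inv, h16]
  have hc : (S \ S').card = 232 := by
    rw [Finset.card_sdiff_of_subset hss, hS, hS']
  rw [PiLp.inner_apply, Finset.sum_congr rfl (fun i _ => h i), Finset.sum_add_distrib,
    Finset.sum_ite_mem, Finset.sum_ite_mem]
  simp only [Finset.univ_inter, Finset.sum_const, hS', hc, nsmul_eq_mul]
  push_cast
  ring

theorem grover_step {N : ℕ} (S' S : Finset (Fin N)) (hss : S' ⊆ S)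
    (hS : S.card = 256) (hS' : S'.card = 24) (a b : ℂ) :
    groverReflection (uniformSuperposition S) (groverOracle S' (gvec S' S a b)) =
      gvec S' S ((-24 * a + 232 * b) / 128 + a) ((-24 * a + 232 * b) / 128 - b) := by
  have ho : groverOracle S' (gvec S' S a b) = gvec S' S (-a) b := by
    ext i
    by_cases h1 : i ∈ S' <;> simp [groverOracle, gvec, h1]
  rw [ho, unif_eq S' S hss hS, groverReflection, gvec_inner S' S hss hS hS']
  ext i
  by_cases h1 : i ∈ S' <;> by_cases h2 : i ∈ S <;> simp [gvec, h1, h2] <;> ring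

/-- **Statevector calculation for 4-coloring `K₄`** (`|S| = 256` color assignments,
`|S'| = 24` proper colorings): after two Grover iterations each marked state is measured
with probability `43681/1048576 ≈ 0.041657`, and each unmarked state of the restricted
space with probability `29/30408704 ≈ 10⁻⁶`. -/
theorem grover_four_coloring_K4
    (N : ℕ) (hN : 0 < N) (S' S : Finset (Fin N)) (hss : S' ⊆ S)
    (hS : S.card = 256) (hS' : S'.card = 24)
    (G : EuclideanSpace ℂ (Fin N) → EuclideanSpace ℂ (Fin N))
    (hG : G = groverReflection (uniformSuperposition S) ∘ groverOracle S') :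
    (∀ i ∈ S',
      ‖⟪EuclideanSpace.single i (1 : ℂ), G^[2] (uniformSuperposition S)⟫_ℂ‖ ^ 2 =
        43681 / 1048576) ∧
    (∀ i ∈ S \ S',
      ‖⟪EuclideanSpace.single i (1 : ℂ), G^[2] (uniformSuperposition S)⟫_ℂ‖ ^ 2 =
        29 / 30408704) := by
  have h2 : G^[2] (uniformSuperposition S) = gvec S' S (209/1024) (1/1024) := by
    rw [Function.iterate_succ_apply, Function.iterate_one, hG]
    simp only [Function.comp_apply]
    nth_rewrite 3 [unif_eq S' S hss hS]
    rw [grover_step S' S hss hS hS', grover_step S' S hss hS hS']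
    norm_num
  rw [h2]
  constructor
  · intro i hi
    rw [EuclideanSpace.inner_single_left]
    simp [gvec, hi]
    norm_num
  · intro i hi
    rw [Finset.mem_sdiff] at hi
    rw [EuclideanSpace.inner_single_left]
    simp [gvec, hi.1, hi.2]
    norm_num
end
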